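/- Let A, B, C be real symmetric n×n matrices (not necessarily traceless) with ‖A‖² + ‖B‖² + ‖C‖² = 1. Then ‖[A,B]‖² + ‖[B,C]‖² + ‖[C,A]‖² ≤ 1/2. (This is the DDVV inequality P(n,3).) -/

import Mathlib

open Matrix BigOperators

/-- Frobenius norm squared of a real `n × n` matrix: the sum of the squares of all entries. -/
noncomputable def frobSq {n : ℕ} (A : Matrix (Fin n) (Fin n) ℝ) : ℝ :=
  ∑ i, ∑ j, (A i j) ^ 2

/-- The commutator `[A, B] = A * B - B * A`. -/
def mcomm {n : ℕ} (A B : Matrix (Fin n) (Fin n) ℝ) : Matrix (Fin n) (Fin n) ℝ :=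
  A * B - B * A

/-! Among the symmetric triples `(A, B, C)` of unit norm that maximise the sum of the squared
commutators, choose one for which `‖A‖` is largest. The sum is invariant under rotations of the
triple, so no unit combination of `B` and `C` is longer than `A`. Diagonalising `A`, this turns
into a bound on the entries of `B` and `C` which yields
`‖[A, B]‖² + ‖[A, C]‖² ≤ ‖A‖² (‖A‖² + ‖B‖² + ‖C‖²)`. On the other hand, stationarity under rescaling
of `A` says that the left side is `2 M ‖A‖²`, where `M` is the maximum; hence `M ≤ 1 / 2`. -/

section RealAndTopology

lemma exists_isMax_lex {X α β : Type*} [TopologicalSpace X]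
    [LinearOrder α] [TopologicalSpace α] [ClosedIciTopology α]
    [LinearOrder β] [TopologicalSpace β] [ClosedIciTopology β]
    {s : Set X} (hs : IsCompact s) (hne : s.Nonempty) {f : X → α} {g : X → β}
    (hf : Continuous f) (hg : Continuous g) :
    ∃ x ∈ s, (∀ y ∈ s, f y ≤ f x) ∧ ∀ y ∈ s, f y = f x → g y ≤ g x := by
  obtain ⟨m, hm, hfm⟩ := hs.exists_isMaxOn hne hf.continuousOn
  have hlevel : IsCompact (s ∩ f ⁻¹' Set.Ici (f m)) := hs.inter_right (isClosed_Ici.preimage hf)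
  obtain ⟨x, ⟨hx, hmx : f m ≤ f x⟩, hgx⟩ := hlevel.exists_isMaxOn ⟨m, hm, le_rfl⟩ hg.continuousOn
  exact ⟨x, hx, fun y hy ↦ (hfm hy).trans hmx, fun y hy hyx ↦ hgx ⟨hy, hmx.trans hyx.ge⟩⟩

lemma exists_cos_mul_add_sin_mul_sq_eq (x y : ℝ) :
    ∃ θ : ℝ, (Real.cos θ * x + Real.sin θ * y) ^ 2 = x ^ 2 + y ^ 2 := by
  set z : ℂ := ⟨x, y⟩
  refine ⟨z.arg, ?_⟩
  have hx : ‖z‖ * Real.cos z.arg = x := Complex.norm_mul_cos_arg z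
  have hy : ‖z‖ * Real.sin z.arg = y := Complex.norm_mul_sin_arg z
  have hcs := Real.cos_sq_add_sin_sq z.arg
  rw [← hx, ← hy]
  linear_combination ‖z‖ ^ 2 * (Real.cos z.arg ^ 2 + Real.sin z.arg ^ 2) * hcs

lemma eq_two_mul_of_le_mul_sq {a b p q M : ℝ}
    (hle : ∀ t : ℝ, t ^ 2 * p + q ≤ M * (t ^ 2 * a + b) ^ 2)
    (heq : p + q = M * (a + b) ^ 2) : p = 2 * M * a * (a + b) := by
  let gap (t : ℝ) : ℝ := M * (t ^ 2 * a + b) ^ 2 - (t ^ 2 * p + q)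
  have hmin : IsLocalMin gap 1 := Filter.Eventually.of_forall fun t ↦ by
    simp only [gap, one_pow, one_mul, heq, sub_self]
    exact sub_nonneg.2 (hle t)
  have hsq : HasDerivAt (fun t : ℝ ↦ t ^ 2) 2 1 := by simpa using hasDerivAt_pow 2 (1 : ℝ)
  have hderiv : HasDerivAt gap _ 1 :=
    ((((hsq.mul_const a).add_const b).pow 2).const_mul M).sub ((hsq.mul_const p).add_const q)
  have hzero := hmin.hasDerivAt_eq_zero hderiv
  norm_num at hzero
  linarith

end RealAndTopology

section WeightedDifferences

variable {ι : Type*} [Fintype ι] (l : ι → ℝ)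

lemma sum_sq_le_sum_univ_sq (s : Finset ι) : ∑ k ∈ s, l k ^ 2 ≤ ∑ k, l k ^ 2 :=
  Finset.sum_le_univ_sum_of_nonneg fun _ ↦ sq_nonneg _

lemma sub_sq_le_two_mul_sum_sq (p q : ι) : (l p - l q) ^ 2 ≤ 2 * ∑ k, l k ^ 2 := by
  classical
  rcases eq_or_ne p q with rfl | hpq
  · simpa using Finset.sum_nonneg fun k (_ : k ∈ Finset.univ) ↦ sq_nonneg (l k)
  · have hsum := sum_sq_le_sum_univ_sq l {p, q}
    rw [Finset.sum_pair hpq] at hsum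
    linarith [sq_nonneg (l p + l q)]

lemma sub_sq_add_sub_sq_le_of_ne {x y z : ι} (hxy : x ≠ y) (hxz : x ≠ z) (hyz : y ≠ z) :
    (l x - l y) ^ 2 + (l x - l z) ^ 2 ≤ 3 * ∑ k, l k ^ 2 := by
  classical
  have hsum := sum_sq_le_sum_univ_sq l {x, y, z}
  rw [Finset.sum_insert (by simp [hxy, hxz]), Finset.sum_pair hyz] at hsum
  linarith [sq_nonneg (l x + l y + l z), sq_nonneg (l y - l z)]

lemma sub_sq_add_sub_sq_le {p q i j : ι} (h : s(i, j) ≠ s(p, q)) :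
    (l p - l q) ^ 2 + (l i - l j) ^ 2 ≤ 3 * ∑ k, l k ^ 2 := by
  classical
  have hnonneg : 0 ≤ ∑ k, l k ^ 2 := Finset.sum_nonneg fun k _ ↦ sq_nonneg (l k)
  rcases eq_or_ne p q with rfl | hpq
  · linarith [sub_sq_le_two_mul_sum_sq l i j, sub_self (l p)]
  rcases eq_or_ne i j with rfl | hij
  · linarith [sub_sq_le_two_mul_sum_sq l p q, sub_self (l i)]
  obtain ⟨hne, hne'⟩ : (i = p → j ≠ q) ∧ (i = q → j ≠ p) := by
    simpa only [ne_eq, Sym2.eq_iff, not_or, not_and] using h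
  rcases eq_or_ne i p with rfl | hip
  · exact sub_sq_add_sub_sq_le_of_ne l hpq hij (hne rfl).symm
  rcases eq_or_ne i q with rfl | hiq
  · linarith [sub_sq_add_sub_sq_le_of_ne l hpq.symm hij (hne' rfl).symm]
  rcases eq_or_ne j p with rfl | hjp
  · linarith [sub_sq_add_sub_sq_le_of_ne l hpq hij.symm hiq.symm]
  rcases eq_or_ne j q with rfl | hjq
  · linarith [sub_sq_add_sub_sq_le_of_ne l hpq.symm hij.symm hip.symm]
  have hsum := sum_sq_le_sum_univ_sq l {p, q, i, j}
  rw [Finset.sum_insert (by simp [hpq, hip.symm, hjp.symm]),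
    Finset.sum_insert (by simp [hiq.symm, hjq.symm]), Finset.sum_pair hij] at hsum
  linarith [sq_nonneg (l p + l q), sq_nonneg (l i + l j)]

lemma sum_sub_sq_mul_le_of_lt {w : ι → ι → ℝ} (hw : ∀ i j, 0 ≤ w i j)
    (hoff : ∀ i j, i ≠ j → 2 * w i j ≤ ∑ k, l k ^ 2) {p q : ι}
    (hlarge : 3 / 2 * ∑ k, l k ^ 2 < (l p - l q) ^ 2) :
    ∑ i, ∑ j, (l i - l j) ^ 2 * w i j ≤
      (3 * ∑ k, l k ^ 2 - (l p - l q) ^ 2) * ∑ i, ∑ j, w i j +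
        (2 * (l p - l q) ^ 2 - 3 * ∑ k, l k ^ 2) * ∑ k, l k ^ 2 := by
  classical
  set a := ∑ k, l k ^ 2
  have ha : 0 ≤ a := Finset.sum_nonneg fun k _ ↦ sq_nonneg (l k)
  have hpq : p ≠ q := by
    rintro rfl
    rw [sub_self] at hlarge
    linarith
  set m := (l p - l q) ^ 2 with hm
  let excess (x : ι × ι) : ℝ := ((l x.1 - l x.2) ^ 2 - (3 * a - m)) * w x.1 x.2
  -- The squared differences over two distinct pairs add up to at most `3 * a`, so only the terms
  -- at `(p, q)` and `(q, p)` can be positive.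
  have hexcess : ∑ x, excess x ≤ (2 * m - 3 * a) * a :=
    calc ∑ x, excess x ≤ ∑ x ∈ {(p, q), (q, p)}, excess x := by
          refine Finset.sum_le_sum_of_subset_of_nonpos' (Finset.subset_univ _) fun x _ hx ↦ ?_
          have hx' : s(x.1, x.2) ≠ s(p, q) := by
            contrapose! hx
            simpa [Prod.ext_iff] using hx
          exact mul_nonpos_of_nonpos_of_nonneg (by linarith [sub_sq_add_sub_sq_le l hx']) (hw _ _)
      _ = (2 * m - 3 * a) * (w p q + w q p) := by
          rw [Finset.sum_pair (by simp [hpq])]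
          simp only [excess, hm]
          ring
      _ ≤ (2 * m - 3 * a) * a := by
          gcongr
          · linarith
          · linarith [hoff p q hpq, hoff q p hpq.symm]
  calc ∑ i, ∑ j, (l i - l j) ^ 2 * w i j
      = (3 * a - m) * ∑ i, ∑ j, w i j + ∑ x, excess x := by
        simp only [excess, Fintype.sum_prod_type, sub_mul _ (3 * a - m), Finset.sum_sub_distrib,
          Finset.mul_sum]
        ring
    _ ≤ (3 * a - m) * ∑ i, ∑ j, w i j + (2 * m - 3 * a) * a := by gcongr

lemma sum_sub_sq_mul_le {w : ι → ι → ℝ} (hw : ∀ i j, 0 ≤ w i j)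
    (hoff : ∀ i j, i ≠ j → 2 * w i j ≤ ∑ k, l k ^ 2)
    (htot : ∑ i, ∑ j, w i j ≤ 2 * ∑ k, l k ^ 2) :
    ∑ i, ∑ j, (l i - l j) ^ 2 * w i j ≤ (∑ k, l k ^ 2) * (∑ k, l k ^ 2 + ∑ i, ∑ j, w i j) := by
  have ha : 0 ≤ ∑ k, l k ^ 2 := Finset.sum_nonneg fun k _ ↦ sq_nonneg (l k)
  by_cases! hsmall : ∀ i j, (l i - l j) ^ 2 ≤ 3 / 2 * ∑ k, l k ^ 2
  · calc ∑ i, ∑ j, (l i - l j) ^ 2 * w i j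
        ≤ ∑ i, ∑ j, 3 / 2 * (∑ k, l k ^ 2) * w i j := by
          gcongr with i _ j _
          exacts [hw i j, hsmall i j]
      _ = 3 / 2 * (∑ k, l k ^ 2) * ∑ i, ∑ j, w i j := by simp only [← Finset.mul_sum]
      _ ≤ (∑ k, l k ^ 2) * (∑ k, l k ^ 2 + ∑ i, ∑ j, w i j) := by nlinarith
  · obtain ⟨p, q, hlarge⟩ := hsmall
    linarith [sum_sub_sq_mul_le_of_lt l hw hoff hlarge,
      mul_nonneg (sub_nonneg.2 (sub_sq_le_two_mul_sum_sq l p q)) (sub_nonneg.2 htot)]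

end WeightedDifferences

section Frobenius

open scoped Matrix.Norms.Frobenius

variable {ι : Type*} [Fintype ι]

lemma frobenius_norm_sq (A : Matrix ι ι ℝ) : ‖A‖ ^ 2 = ∑ i, ∑ j, A i j ^ 2 := by
  rw [frobenius_norm_def, ← Real.sqrt_eq_rpow, Real.sq_sqrt (by positivity)]
  simp

lemma frobenius_norm_sq_eq_trace (A : Matrix ι ι ℝ) : ‖A‖ ^ 2 = (star A * A).trace := by
  rw [frobenius_norm_sq, Finset.sum_comm]
  simp [trace, mul_apply, sq]

lemma norm_rotate_sq_add (θ : ℝ) (X Y : Matrix ι ι ℝ) :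
    ‖Real.cos θ • X + Real.sin θ • Y‖ ^ 2 + ‖Real.cos θ • Y - Real.sin θ • X‖ ^ 2 =
      ‖X‖ ^ 2 + ‖Y‖ ^ 2 := by
  simp only [frobenius_norm_sq, ← Finset.sum_add_distrib, Matrix.add_apply,
    Matrix.sub_apply, Matrix.smul_apply, smul_eq_mul]
  refine Finset.sum_congr rfl fun i _ ↦ Finset.sum_congr rfl fun j _ ↦ ?_
  linear_combination (X i j ^ 2 + Y i j ^ 2) * Real.cos_sq_add_sin_sq θ

lemma two_mul_sq_le_norm_sq {A : Matrix ι ι ℝ} (hA : A.IsSymm) {i j : ι} (hij : i ≠ j) :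
    2 * A i j ^ 2 ≤ ‖A‖ ^ 2 := by
  classical
  calc 2 * A i j ^ 2 = ∑ x ∈ {(i, j), (j, i)}, A x.1 x.2 ^ 2 := by
        rw [Finset.sum_pair (by simp [hij]), hA.apply i j, two_mul]
    _ ≤ ∑ x : ι × ι, A x.1 x.2 ^ 2 := Finset.sum_le_univ_sum_of_nonneg fun _ ↦ sq_nonneg _
    _ = ‖A‖ ^ 2 := by rw [frobenius_norm_sq, Fintype.sum_prod_type]

lemma norm_lie_comm (A B : Matrix ι ι ℝ) : ‖⁅A, B⁆‖ = ‖⁅B, A⁆‖ :=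
  norm_sub_rev (A * B) (B * A)

lemma norm_lie_diagonal_sq [DecidableEq ι] (l : ι → ℝ) (B : Matrix ι ι ℝ) :
    ‖⁅diagonal l, B⁆‖ ^ 2 = ∑ i, ∑ j, (l i - l j) ^ 2 * B i j ^ 2 := by
  simp only [frobenius_norm_sq, Ring.lie_def, Matrix.sub_apply, diagonal_mul, mul_diagonal]
  refine Finset.sum_congr rfl fun i _ ↦ Finset.sum_congr rfl fun j _ ↦ ?_
  ring

lemma norm_conjStarAlgAut [DecidableEq ι] (U : unitary (Matrix ι ι ℝ)) (A : Matrix ι ι ℝ) :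
    ‖Unitary.conjStarAlgAut ℝ _ U A‖ = ‖A‖ := by
  rw [← sq_eq_sq₀ (norm_nonneg _) (norm_nonneg _), frobenius_norm_sq_eq_trace,
    frobenius_norm_sq_eq_trace, ← map_star, ← map_mul, Unitary.conjStarAlgAut_apply,
    trace_mul_cycle, Unitary.star_mul_self_of_mem U.2, one_mul]

lemma conjStarAlgAut_lie [DecidableEq ι] (U : unitary (Matrix ι ι ℝ)) (A B : Matrix ι ι ℝ) :
    Unitary.conjStarAlgAut ℝ _ U ⁅A, B⁆ =
      ⁅Unitary.conjStarAlgAut ℝ _ U A, Unitary.conjStarAlgAut ℝ _ U B⁆ := by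
  simp only [Ring.lie_def, map_sub, map_mul]

lemma norm_lie_diagonal_sq_add_le [DecidableEq ι] (l : ι → ℝ) {B C : Matrix ι ι ℝ}
    (hB : B.IsSymm) (hC : C.IsSymm)
    (h : ∀ θ : ℝ, ‖Real.cos θ • B + Real.sin θ • C‖ ≤ ‖diagonal l‖) :
    ‖⁅diagonal l, B⁆‖ ^ 2 + ‖⁅diagonal l, C⁆‖ ^ 2 ≤
      ‖diagonal l‖ ^ 2 * (‖diagonal l‖ ^ 2 + ‖B‖ ^ 2 + ‖C‖ ^ 2) := by
  have hl : ‖diagonal l‖ ^ 2 = ∑ k, l k ^ 2 := by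
    rw [frobenius_norm_diagonal, EuclideanSpace.real_norm_sq_eq]
  have hBC : ‖B‖ ^ 2 + ‖C‖ ^ 2 = ∑ i, ∑ j, (B i j ^ 2 + C i j ^ 2) := by
    simp only [frobenius_norm_sq, Finset.sum_add_distrib]
  have hB' : ‖B‖ ≤ ‖diagonal l‖ := by simpa using h 0
  have hC' : ‖C‖ ≤ ‖diagonal l‖ := by simpa using h (Real.pi / 2)
  have key := sum_sub_sq_mul_le l (w := fun i j ↦ B i j ^ 2 + C i j ^ 2) (fun i j ↦ by positivity)
    (fun i j hij ↦ ?_) ?_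
  · rw [norm_lie_diagonal_sq, norm_lie_diagonal_sq, add_assoc, hBC, hl]
    simpa only [mul_add, Finset.sum_add_distrib] using key
  · obtain ⟨θ, hθ⟩ := exists_cos_mul_add_sin_mul_sq_eq (B i j) (C i j)
    calc 2 * (B i j ^ 2 + C i j ^ 2)
        = 2 * (Real.cos θ • B + Real.sin θ • C) i j ^ 2 := by simp [← hθ]
      _ ≤ ‖Real.cos θ • B + Real.sin θ • C‖ ^ 2 :=
          two_mul_sq_le_norm_sq ((hB.smul _).add (hC.smul _)) hij
      _ ≤ ‖diagonal l‖ ^ 2 := by gcongr; exact h θ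
      _ = ∑ k, l k ^ 2 := hl
  · rw [← hBC, ← hl, two_mul]
    gcongr

lemma norm_lie_sq_add_le {A B C : Matrix ι ι ℝ} (hA : A.IsSymm) (hB : B.IsSymm) (hC : C.IsSymm)
    (h : ∀ θ : ℝ, ‖Real.cos θ • B + Real.sin θ • C‖ ≤ ‖A‖) :
    ‖⁅A, B⁆‖ ^ 2 + ‖⁅A, C⁆‖ ^ 2 ≤ ‖A‖ ^ 2 * (‖A‖ ^ 2 + ‖B‖ ^ 2 + ‖C‖ ^ 2) := by
  classical
  have hA' : A.IsHermitian := isHermitian_iff_isSymm.2 hA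
  set φ := Unitary.conjStarAlgAut ℝ (Matrix ι ι ℝ) (star hA'.eigenvectorUnitary)
  have hdiag : φ A = diagonal hA'.eigenvalues := hA'.conjStarAlgAut_star_eigenvectorUnitary
  have hnorm (X : Matrix ι ι ℝ) : ‖φ X‖ = ‖X‖ := norm_conjStarAlgAut _ X
  have hsymm {X : Matrix ι ι ℝ} (hX : X.IsSymm) : (φ X).IsSymm :=
    isHermitian_iff_isSymm.1 ((isHermitian_iff_isSymm.2 hX).isSelfAdjoint.map φ)
  have key := norm_lie_diagonal_sq_add_le hA'.eigenvalues (hsymm hB) (hsymm hC) fun θ ↦ by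
    simpa only [← hdiag, ← map_smul, ← map_add, hnorm] using h θ
  simpa only [← hdiag, φ, ← conjStarAlgAut_lie, norm_conjStarAlgAut] using key

/-- A triple of square real matrices, with the componentwise scalar multiplication and the product
topology. -/
abbrev MatrixTriple (ι : Type*) : Type _ := Matrix ι ι ℝ × Matrix ι ι ℝ × Matrix ι ι ℝ

namespace MatrixTriple

/-- The sum of the squared Frobenius norms of the members of a triple. -/
noncomputable def normSq (T : MatrixTriple ι) : ℝ := ‖T.1‖ ^ 2 + ‖T.2.1‖ ^ 2 + ‖T.2.2‖ ^ 2

/-- The sum of the squared Frobenius norms of the three commutators of a triple. -/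
noncomputable def lieSq (T : MatrixTriple ι) : ℝ :=
  ‖⁅T.1, T.2.1⁆‖ ^ 2 + ‖⁅T.2.1, T.2.2⁆‖ ^ 2 + ‖⁅T.2.2, T.1⁆‖ ^ 2

/-- All three members of the triple are symmetric matrices. -/
def IsSymm (T : MatrixTriple ι) : Prop := T.1.IsSymm ∧ T.2.1.IsSymm ∧ T.2.2.IsSymm

/-- The triples of symmetric matrices whose squared norms add up to `1`. -/
def symmSphere (ι : Type*) [Fintype ι] : Set (MatrixTriple ι) := {T | T.IsSymm ∧ T.normSq = 1}

/-- A symmetric triple of unit norm which maximises `lieSq` and whose first member is the longest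
possible among all such maximisers. -/
structure IsExtremal (T : MatrixTriple ι) : Prop where
  mem : T ∈ symmSphere ι
  lieSq_le : ∀ S ∈ symmSphere ι, lieSq S ≤ lieSq T
  norm_fst_le : ∀ S ∈ symmSphere ι, lieSq S = lieSq T → ‖S.1‖ ≤ ‖T.1‖

lemma continuous_normSq : Continuous (normSq (ι := ι)) := by
  unfold normSq
  fun_prop

lemma continuous_lieSq : Continuous (lieSq (ι := ι)) := by
  unfold lieSq
  simp only [Ring.lie_def]
  fun_prop

lemma isCompact_symmSphere : IsCompact (symmSphere ι) := by
  refine Metric.isCompact_of_isClosed_isBounded ?_ ?_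
  · refine ((isClosed_eq ?_ ?_).inter ((isClosed_eq ?_ ?_).inter (isClosed_eq ?_ ?_))).inter
      (isClosed_eq continuous_normSq continuous_const) <;> fun_prop
  · refine (Metric.isBounded_closedBall (x := 0) (r := 1)).subset ?_
    rintro T ⟨-, hT⟩
    have hsum : ‖T.1‖ ^ 2 + ‖T.2.1‖ ^ 2 + ‖T.2.2‖ ^ 2 = 1 := hT
    simp only [mem_closedBall_zero_iff, norm_prod_le_iff]
    refine ⟨?_, ?_, ?_⟩ <;> rw [← sq_le_one_iff₀ (norm_nonneg _)] <;>
      linarith [sq_nonneg ‖T.1‖, sq_nonneg ‖T.2.1‖, sq_nonneg ‖T.2.2‖]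

lemma exists_isExtremal (h : (symmSphere ι).Nonempty) : ∃ T : MatrixTriple ι, IsExtremal T := by
  obtain ⟨T, hT, hmax, hlex⟩ := exists_isMax_lex isCompact_symmSphere h continuous_lieSq
    (continuous_norm.comp continuous_fst)
  exact ⟨T, hT, hmax, hlex⟩

lemma normSq_nonneg (T : MatrixTriple ι) : 0 ≤ normSq T := by
  unfold normSq
  positivity

lemma normSq_eq_zero_iff {T : MatrixTriple ι} : normSq T = 0 ↔ T = 0 := by
  simp only [normSq, Prod.ext_iff, Prod.fst_zero, Prod.snd_zero]
  rw [add_eq_zero_iff_of_nonneg (by positivity) (by positivity),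
    add_eq_zero_iff_of_nonneg (by positivity) (by positivity)]
  simp [and_assoc]

lemma normSq_smul (t : ℝ) (T : MatrixTriple ι) : normSq (t • T) = t ^ 2 * normSq T := by
  simp only [normSq, Prod.smul_fst, Prod.smul_snd, norm_smul, mul_pow, Real.norm_eq_abs, sq_abs]
  ring

lemma lieSq_zero : lieSq (0 : MatrixTriple ι) = 0 := by
  simp [lieSq, Ring.lie_def]

lemma lieSq_smul (t : ℝ) (T : MatrixTriple ι) : lieSq (t • T) = t ^ 4 * lieSq T := by
  simp only [lieSq, Prod.smul_fst, Prod.smul_snd, Ring.lie_def, smul_mul_assoc, mul_smul_comm,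
    ← smul_sub, norm_smul, mul_pow, Real.norm_eq_abs, sq_abs]
  ring

lemma lieSq_smul_fst (t : ℝ) (A B C : Matrix ι ι ℝ) :
    lieSq (t • A, B, C) = t ^ 2 * (‖⁅A, B⁆‖ ^ 2 + ‖⁅A, C⁆‖ ^ 2) + ‖⁅B, C⁆‖ ^ 2 := by
  rw [lieSq, norm_lie_comm C]
  simp only [Ring.lie_def, smul_mul_assoc, mul_smul_comm, ← smul_sub, norm_smul, mul_pow,
    Real.norm_eq_abs, sq_abs]
  ring

lemma lieSq_rotate (θ : ℝ) (A B C : Matrix ι ι ℝ) :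
    lieSq (Real.cos θ • B + Real.sin θ • C, Real.cos θ • C - Real.sin θ • B, A) =
      lieSq (A, B, C) := by
  have hBC : ⁅Real.cos θ • B + Real.sin θ • C, Real.cos θ • C - Real.sin θ • B⁆ =
      (Real.cos θ ^ 2 + Real.sin θ ^ 2) • ⁅B, C⁆ := by
    simp only [Ring.lie_def, add_mul, mul_add, sub_mul, mul_sub, smul_mul_assoc, mul_smul_comm]
    module
  have hAB : ⁅A, Real.cos θ • B + Real.sin θ • C⁆ = Real.cos θ • ⁅A, B⁆ + Real.sin θ • ⁅A, C⁆ := by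
    simp only [Ring.lie_def, add_mul, mul_add, smul_mul_assoc, mul_smul_comm]
    module
  have hAC : ⁅A, Real.cos θ • C - Real.sin θ • B⁆ = Real.cos θ • ⁅A, C⁆ - Real.sin θ • ⁅A, B⁆ := by
    simp only [Ring.lie_def, sub_mul, mul_sub, smul_mul_assoc, mul_smul_comm]
    module
  rw [Real.cos_sq_add_sin_sq, one_smul] at hBC
  simp only [lieSq, norm_lie_comm _ A, hBC, hAB, hAC]
  linarith [norm_rotate_sq_add θ ⁅A, B⁆ ⁅A, C⁆]

lemma inv_sqrt_smul_mem_symmSphere {T : MatrixTriple ι} (hsymm : T.IsSymm) (hT : 0 < normSq T) :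
    (√(normSq T))⁻¹ • T ∈ symmSphere ι := by
  refine ⟨⟨hsymm.1.smul _, hsymm.2.1.smul _, hsymm.2.2.smul _⟩, ?_⟩
  rw [normSq_smul, inv_pow, Real.sq_sqrt hT.le, inv_mul_cancel₀ hT.ne']

namespace IsExtremal

variable {A B C : Matrix ι ι ℝ}

lemma lieSq_le_mul_normSq_sq {T S : MatrixTriple ι} (hT : IsExtremal T)
    (hS : S.IsSymm) : lieSq S ≤ lieSq T * normSq S ^ 2 := by
  rcases (normSq_nonneg S).eq_or_lt with hzero | hpos
  · simp [normSq_eq_zero_iff.1 hzero.symm, lieSq_zero, normSq]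
  · have hscaled := hT.lieSq_le _ (inv_sqrt_smul_mem_symmSphere hS hpos)
    have hpow : (√(normSq S))⁻¹ ^ 4 = (normSq S ^ 2)⁻¹ := by
      rw [inv_pow, pow_mul (√(normSq S)) 2 2, Real.sq_sqrt hpos.le]
    rwa [lieSq_smul, hpow, inv_mul_le_iff₀ (by positivity), mul_comm] at hscaled

lemma norm_rotate_le (h : IsExtremal (A, B, C)) (θ : ℝ) :
    ‖Real.cos θ • B + Real.sin θ • C‖ ≤ ‖A‖ := by
  obtain ⟨⟨hA, hB, hC⟩, hsum⟩ := h.mem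
  refine h.norm_fst_le (_, Real.cos θ • C - Real.sin θ • B, A)
    ⟨⟨(hB.smul _).add (hC.smul _), (hC.smul _).sub (hB.smul _), hA⟩, ?_⟩ (lieSq_rotate θ A B C)
  simp only [normSq] at hsum ⊢
  linarith [norm_rotate_sq_add θ B C]

lemma norm_lie_sq_add_eq (h : IsExtremal (A, B, C)) :
    ‖⁅A, B⁆‖ ^ 2 + ‖⁅A, C⁆‖ ^ 2 = 2 * lieSq (A, B, C) * ‖A‖ ^ 2 := by
  obtain ⟨⟨hA, hB, hC⟩, hsum⟩ := h.mem
  have hsum' : ‖A‖ ^ 2 + (‖B‖ ^ 2 + ‖C‖ ^ 2) = 1 := by simpa only [normSq, add_assoc] using hsum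
  have hstat := eq_two_mul_of_le_mul_sq (a := ‖A‖ ^ 2) (b := ‖B‖ ^ 2 + ‖C‖ ^ 2)
    (p := ‖⁅A, B⁆‖ ^ 2 + ‖⁅A, C⁆‖ ^ 2) (q := ‖⁅B, C⁆‖ ^ 2) (M := lieSq (A, B, C))
    (fun t ↦ ?_) ?_
  · rwa [hsum', mul_one] at hstat
  · have hle := h.lieSq_le_mul_normSq_sq (S := (t • A, B, C)) ⟨hA.smul t, hB, hC⟩
    rw [lieSq_smul_fst] at hle
    simpa only [normSq, norm_smul, mul_pow, Real.norm_eq_abs, sq_abs, add_assoc] using hle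
  · rw [hsum', one_pow, mul_one]
    simpa using (lieSq_smul_fst 1 A B C).symm

lemma lieSq_le_half (h : IsExtremal (A, B, C)) : lieSq (A, B, C) ≤ 1 / 2 := by
  obtain ⟨⟨hA, hB, hC⟩, hsum : ‖A‖ ^ 2 + ‖B‖ ^ 2 + ‖C‖ ^ 2 = 1⟩ := h.mem
  have hB' : ‖B‖ ^ 2 ≤ ‖A‖ ^ 2 := by gcongr; simpa using h.norm_rotate_le 0
  have hC' : ‖C‖ ^ 2 ≤ ‖A‖ ^ 2 := by gcongr; simpa using h.norm_rotate_le (Real.pi / 2)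
  have hpos : 0 < ‖A‖ ^ 2 := by linarith
  have hle := norm_lie_sq_add_le hA hB hC h.norm_rotate_le
  rw [h.norm_lie_sq_add_eq, hsum, mul_comm] at hle
  linarith [le_of_mul_le_mul_left hle hpos]

end IsExtremal

end MatrixTriple

theorem ddvv_P_n_3_general {A B C : Matrix ι ι ℝ} (hA : A.IsSymm) (hB : B.IsSymm)
    (hC : C.IsSymm) :
    ‖⁅A, B⁆‖ ^ 2 + ‖⁅B, C⁆‖ ^ 2 + ‖⁅C, A⁆‖ ^ 2 ≤ 1 / 2 * (‖A‖ ^ 2 + ‖B‖ ^ 2 + ‖C‖ ^ 2) ^ 2 := by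
  let T : MatrixTriple ι := (A, B, C)
  have hT : T.IsSymm := ⟨hA, hB, hC⟩
  change T.lieSq ≤ 1 / 2 * T.normSq ^ 2
  rcases T.normSq_nonneg.eq_or_lt with hzero | hpos
  · simp [MatrixTriple.normSq_eq_zero_iff.1 hzero.symm, MatrixTriple.lieSq_zero,
      MatrixTriple.normSq]
  obtain ⟨M, hM⟩ := MatrixTriple.exists_isExtremal
    ⟨_, MatrixTriple.inv_sqrt_smul_mem_symmSphere hT hpos⟩
  calc T.lieSq ≤ M.lieSq * T.normSq ^ 2 := hM.lieSq_le_mul_normSq_sq hT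
    _ ≤ 1 / 2 * T.normSq ^ 2 := by gcongr; exact hM.lieSq_le_half

lemma frobSq_eq_norm_sq {n : ℕ} (A : Matrix (Fin n) (Fin n) ℝ) : frobSq A = ‖A‖ ^ 2 :=
  (frobenius_norm_sq A).symm

lemma mcomm_eq_lie {n : ℕ} (A B : Matrix (Fin n) (Fin n) ℝ) : mcomm A B = ⁅A, B⁆ := rfl

end Frobenius

/-- P(n,3): for real symmetric `n × n` matrices `A, B, C` with
`‖A‖² + ‖B‖² + ‖C‖² = 1`, one has `‖[A,B]‖² + ‖[B,C]‖² + ‖[C,A]‖² ≤ 1/2`. -/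
theorem ddvv_P_n_3 (n : ℕ) (A B C : Matrix (Fin n) (Fin n) ℝ)
    (hA : A.IsSymm) (hB : B.IsSymm) (hC : C.IsSymm)
    (hsum : frobSq A + frobSq B + frobSq C = 1) :
    frobSq (mcomm A B) + frobSq (mcomm B C) + frobSq (mcomm C A) ≤ 1 / 2 := by
  simp only [frobSq_eq_norm_sq, mcomm_eq_lie] at hsum ⊢
  simpa [hsum] using ddvv_P_n_3_general hA hB hC
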